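/- Let m ≥ 1 be an integer and ε > 0. On ℂ^{2m} with the Euclidean norm, let A = (1−ε)I + 2εS, where S is the nilpotent shift S e_j = e_{j−1} for 2 ≤ j ≤ 2m and S e_1 = 0 (so A has 1−ε on the diagonal and 2ε on the superdiagonal). Let x = (1, 1, …, 1) ∈ ℂ^{2m}. Then for every integer n with 1 ≤ n ≤ m, ‖A^n x‖ ≥ (1+ε)^n ‖x‖ / √2. -/

import Mathlib

open Filter Topology MeasureTheory
open scoped Classical ENNReal

noncomputable def distFreq {X : Type*} [MetricSpace X] (f : X → X) (x y : X) (τ : ℝ) (n : ℕ) : ℝ :=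
  (((Finset.range n).filter fun i => dist (f^[i] x) (f^[i] y) < τ).card : ℝ) / n

def DistributionallyChaoticPair {X : Type*} [MetricSpace X] (f : X → X) (x y : X) : Prop :=
  (∀ τ : ℝ, 0 < τ → Filter.limsup (distFreq f x y τ) Filter.atTop = 1) ∧
  (∃ ε : ℝ, 0 < ε ∧ Filter.liminf (distFreq f x y ε) Filter.atTop = 0)

def DistributionallyChaotic {X : Type*} [MetricSpace X] (f : X → X) : Prop :=
  ∃ Λ : Set X, ¬Λ.Countable ∧
    ∀ x ∈ Λ, ∀ y ∈ Λ, x ≠ y → DistributionallyChaoticPair f x y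

def LiYorkePair {X : Type*} [MetricSpace X] (f : X → X) (x y : X) : Prop :=
  0 < Filter.limsup (fun n => edist (f^[n] x) (f^[n] y)) Filter.atTop ∧
  Filter.liminf (fun n => edist (f^[n] x) (f^[n] y)) Filter.atTop = 0

def LiYorkeChaotic {X : Type*} [MetricSpace X] (f : X → X) : Prop :=
  ∃ Γ : Set X, ¬Γ.Countable ∧ ∀ x ∈ Γ, ∀ y ∈ Γ, x ≠ y → LiYorkePair f x y

def NormUnimodal {X : Type*} [NormedAddCommGroup X] [NormedSpace ℂ X] (T : X →L[ℂ] X) : Prop :=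
  ∃ r : ℝ, 1 < r ∧ ∀ m : ℕ, ∃ x : X, x ≠ 0 ∧
    Filter.Tendsto (fun k => ‖(T ^ k) x‖) Filter.atTop (nhds 0) ∧
    ∀ i : ℕ, 1 ≤ i → i ≤ m → r ^ i * ‖x‖ ≤ ‖(T ^ i) x‖

/-!
Writing `A = a + b S`, each coordinate but the last satisfies `(A w)ᵢ = a wᵢ + b wᵢ₊₁`, so away from
the boundary a constant vector `x` behaves like an eigenvector with eigenvalue `a + b`. Each
application of `A` spoils at most one more coordinate: the first `d - n` coordinates of `Aⁿ x` are
those of `(a + b) ^ n x`, and for `2 * n ≤ d` they carry at least half of the squared norm of that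
vector.
-/

section Matrix

open scoped Matrix

/-- The nilpotent shift `S` on `R ^ d`: it kills the first basis vector and sends every other one to
its predecessor. Rows and columns are indexed from `0`. -/
def superdiagonalShift (R : Type*) [Zero R] [One R] (d : ℕ) : Matrix (Fin d) (Fin d) R :=
  Matrix.of fun i j => if (j : ℕ) = (i : ℕ) + 1 then 1 else 0

/-- The bidiagonal Toeplitz matrix with `a` on the diagonal and `b` on the superdiagonal; the matrix
`A` of the theorem is the case `a = 1 - ε`, `b = 2 * ε`. -/
def upperBidiagonal {R : Type*} [Semiring R] (d : ℕ) (a b : R) : Matrix (Fin d) (Fin d) R :=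
  a • (1 : Matrix (Fin d) (Fin d) R) + b • superdiagonalShift R d

theorem superdiagonalShift_mulVec_apply {R : Type*} [NonAssocSemiring R] {d : ℕ}
    (v : Fin d → R) (i : Fin d) (hi : (i : ℕ) + 1 < d) :
    (superdiagonalShift R d *ᵥ v) i = v ⟨i + 1, hi⟩ := by
  have entry_eq (j : Fin d) :
      superdiagonalShift R d i j = if j = ⟨i + 1, hi⟩ then 1 else 0 := by
    simp only [superdiagonalShift, Matrix.of_apply, Fin.ext_iff]
  simp [Matrix.mulVec, dotProduct, entry_eq]

variable {R : Type*} [Semiring R] {d : ℕ}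

theorem upperBidiagonal_mulVec_apply (a b : R) (v : Fin d → R) (i : Fin d)
    (hi : (i : ℕ) + 1 < d) :
    (upperBidiagonal d a b *ᵥ v) i = a * v i + b * v ⟨i + 1, hi⟩ := by
  simp only [upperBidiagonal, Matrix.add_mulVec, Matrix.smul_mulVec, Matrix.one_mulVec,
    Pi.add_apply, Pi.smul_apply, smul_eq_mul, superdiagonalShift_mulVec_apply v i hi]

theorem upperBidiagonal_pow_mulVec_const_apply {n : ℕ} (a b c : R) (i : Fin d)
    (hi : (i : ℕ) + n < d) :
    (upperBidiagonal d a b ^ n *ᵥ fun _ => c) i = (a + b) ^ n * c := by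
  induction n generalizing i with
  | zero => simp
  | succ n ih =>
    rw [pow_succ', ← Matrix.mulVec_mulVec, upperBidiagonal_mulVec_apply a b _ i (by omega),
      ih i (by omega), ih ⟨i + 1, by omega⟩ (by simp only; omega), ← add_mul, pow_succ', mul_assoc]

end Matrix

section Norm

variable {𝕜 : Type*} [RCLike 𝕜]

theorem sqrt_card_mul_le_norm_of_forall_mem_le {ι : Type*} [Fintype ι] (y : EuclideanSpace 𝕜 ι)
    (s : Finset ι) {r : ℝ} (hr : 0 ≤ r) (hy : ∀ i ∈ s, r ≤ ‖y i‖) :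
    √s.card * r ≤ ‖y‖ := by
  refine le_of_sq_le_sq ?_ (norm_nonneg y)
  calc
    (√s.card * r) ^ 2 = s.card • r ^ 2 := by
      rw [mul_pow, Real.sq_sqrt s.card.cast_nonneg, nsmul_eq_mul]
    _ ≤ ∑ i ∈ s, ‖y i‖ ^ 2 :=
      s.card_nsmul_le_sum _ _ fun i hi => pow_le_pow_left₀ hr (hy i hi) 2
    _ ≤ ∑ i, ‖y i‖ ^ 2 :=
      Finset.sum_le_sum_of_subset_of_nonneg s.subset_univ fun i _ _ => sq_nonneg _
    _ = ‖y‖ ^ 2 := (EuclideanSpace.norm_sq_eq y).symm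

theorem sqrt_mul_le_norm_upperBidiagonal_pow_const (d n : ℕ) (a b c : 𝕜) :
    √(d - n : ℕ) * (‖a + b‖ ^ n * ‖c‖) ≤
      ‖Matrix.toEuclideanLin (upperBidiagonal d a b ^ n) (WithLp.toLp 2 fun _ => c)‖ := by
  have card_unspoiled : (Finset.univ.filter fun i : Fin d => (i : ℕ) < d - n).card = d - n := by
    rw [Fin.card_filter_val_lt, min_eq_right (Nat.sub_le d n)]
  rw [← card_unspoiled]
  refine sqrt_card_mul_le_norm_of_forall_mem_le _ _ (by positivity) fun i hi => ?_
  have add_lt : (i : ℕ) + n < d := Nat.add_lt_of_lt_sub (Finset.mem_filter.mp hi).2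
  rw [Matrix.toLpLin_toLp, Matrix.toLin'_apply, PiLp.toLp_apply,
    upperBidiagonal_pow_mulVec_const_apply a b c i add_lt, norm_mul, norm_pow]

end Norm

theorem stmt_17_general {𝕜 : Type*} [RCLike 𝕜] {d n : ℕ} (hn : 2 * n ≤ d) (a b c : 𝕜)
    (x : EuclideanSpace 𝕜 (Fin d)) (hx : ∀ j, x j = c) :
    ‖a + b‖ ^ n * ‖x‖ / √2 ≤ ‖Matrix.toEuclideanLin (upperBidiagonal d a b ^ n) x‖ := by
  have norm_x : ‖x‖ = √d * ‖c‖ := by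
    simp [EuclideanSpace.norm_eq, hx]
  have half_le : (d : ℝ) / 2 ≤ (d - n : ℕ) := by
    rw [div_le_iff₀ two_pos]
    exact_mod_cast (by omega : d ≤ (d - n) * 2)
  calc
    ‖a + b‖ ^ n * ‖x‖ / √2 = √(d / 2) * (‖a + b‖ ^ n * ‖c‖) := by
      rw [norm_x, Real.sqrt_div d.cast_nonneg]
      ring
    _ ≤ √(d - n : ℕ) * (‖a + b‖ ^ n * ‖c‖) := by gcongr
    _ ≤ ‖Matrix.toEuclideanLin (upperBidiagonal d a b ^ n) x‖ := by
      obtain rfl : x = WithLp.toLp 2 fun _ => c := PiLp.ext hx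
      exact sqrt_mul_le_norm_upperBidiagonal_pow_const d n a b c

/-- For A = (1-ε)I + 2εS on ℂ^{2m} (S the nilpotent superdiagonal
shift) and x = (1,…,1), one has ‖Aⁿx‖ ≥ (1+ε)ⁿ‖x‖/√2 for 1 ≤ n ≤ m. -/
theorem stmt_17 (m : ℕ) (hm : 1 ≤ m) (ε : ℝ) (hε : 0 < ε)
    (S A : Matrix (Fin (2 * m)) (Fin (2 * m)) ℂ)
    (hS : ∀ i j, S i j = if (j : ℕ) = (i : ℕ) + 1 then 1 else 0)
    (hA : A = ((1 - ε : ℝ) : ℂ) • (1 : Matrix (Fin (2 * m)) (Fin (2 * m)) ℂ)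
      + ((2 * ε : ℝ) : ℂ) • S)
    (x : EuclideanSpace ℂ (Fin (2 * m))) (hx : ∀ j, x j = 1) :
    ∀ n : ℕ, 1 ≤ n → n ≤ m →
      (1 + ε) ^ n * ‖x‖ / Real.sqrt 2 ≤ ‖Matrix.toEuclideanLin (A ^ n) x‖ := by
  intro n _ hn
  have A_eq : A = upperBidiagonal (2 * m) ((1 - ε : ℝ) : ℂ) ((2 * ε : ℝ) : ℂ) := by
    rw [hA, upperBidiagonal, (Matrix.ext hS : S = superdiagonalShift ℂ (2 * m))]
  have norm_add : ‖((1 - ε : ℝ) : ℂ) + ((2 * ε : ℝ) : ℂ)‖ = 1 + ε := by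
    rw [← Complex.ofReal_add, Complex.norm_of_nonneg (by linarith)]
    ring
  rw [A_eq, ← norm_add]
  exact stmt_17_general (Nat.mul_le_mul_left 2 hn) _ _ 1 x hx
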